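/- Let 𝒜 = {S_2, S_3, …} be the collection of closed squares in ℝ² where S_i has side length 1/i for i ≥ 2. Suppose that for every ε > 0 the collection 𝒜 can be packed into a rectangle of height 1 and area π²/6 − 1 + ε. Then there exists a packing of 𝒜 into a rectangle of dimensions 1 × (π²/6 − 1) such that the complement, within that rectangle, of the union of the packed squares has Lebesgue measure zero (i.e., 𝒜 tiles a rectangle of dimensions 1 × (π²/6 − 1)). -/

import Mathlib

/-!
The packings of a family of nonempty sets into a compact set `C` form a compact space. Indeed, the
linear part of a rigid motion ranges over the compact group `O(n)`, and the translation part, being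
the image of the origin, stays at a fixed distance from the image of a chosen point of the set,
which lies in `C`. Being a packing is a closed condition, because a point lying in the interiors of
two placed sets still does so after small perturbations of both placements. For a directed family
of compact containers the spaces of packings are therefore compact and directed under inclusion,
and if they are all nonempty then they have a common point: a packing into the intersection of the
containers.

In a packing of the squares into the rectangle of width `∑_{i ≥ 2} 1/i² = π²/6 - 1`, their disjoint
interiors have the full area of the rectangle, which leaves a null set uncovered.
-/

open Pointwise

noncomputable section

/-- The rigid motion `(θ, ξ)` acting on a point of `ℝⁿ`: `x ↦ ξ + θx`. -/
def rmApply {n : ℕ} (θ : Matrix (Fin n) (Fin n) ℝ) (ξ : EuclideanSpace ℝ (Fin n))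
    (x : EuclideanSpace ℝ (Fin n)) : EuclideanSpace ℝ (Fin n) :=
  ξ + (EuclideanSpace.equiv (Fin n) ℝ).symm (θ.mulVec (EuclideanSpace.equiv (Fin n) ℝ x))

/-- `(θ, ξ)` is a packing of the family `A` into the set `C`: each `θ i` is orthogonal,
each repositioned set `σᵢ(Aᵢ)` is contained in `C`, and the repositioned sets have
pairwise disjoint interiors. -/
def IsPacking {n : ℕ} {ι : Type*} (A : ι → Set (EuclideanSpace ℝ (Fin n)))
    (θ : ι → Matrix (Fin n) (Fin n) ℝ) (ξ : ι → EuclideanSpace ℝ (Fin n))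
    (C : Set (EuclideanSpace ℝ (Fin n))) : Prop :=
  (∀ i, θ i ∈ Matrix.orthogonalGroup (Fin n) ℝ) ∧
  (∀ i, rmApply (θ i) (ξ i) '' A i ⊆ C) ∧
  Pairwise fun i j =>
    interior (rmApply (θ i) (ξ i) '' A i) ∩ interior (rmApply (θ j) (ξ j) '' A j) = ∅

/-- There exists a packing of `A` into `C`. -/
def PacksInto {n : ℕ} {ι : Type*} (A : ι → Set (EuclideanSpace ℝ (Fin n)))
    (C : Set (EuclideanSpace ℝ (Fin n))) : Prop :=
  ∃ θ ξ, IsPacking A θ ξ C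

/-- The closed axis-aligned rectangle `[0, w] × [0, h]` in `ℝ²`. -/
def rect (w h : ℝ) : Set (EuclideanSpace ℝ (Fin 2)) :=
  {x | x 0 ∈ Set.Icc 0 w ∧ x 1 ∈ Set.Icc 0 h}

/-- The collection of squares of side lengths `1/2`, `1/3`, `1/4`, …: the `i`-th set
(for `i : ℕ`) is a closed square of side length `1/(i+2)`. -/
def reciprocalSquares : ℕ → Set (EuclideanSpace ℝ (Fin 2)) :=
  fun i => rect (1 / ((i : ℝ) + 2)) (1 / ((i : ℝ) + 2))

open MeasureTheory Metric Set

section RigidMotion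

variable {n : ℕ}

/-- The rigid motion `x ↦ ξ + θx` as an isometry of `ℝⁿ` onto itself; `rmApply` makes sense for
any matrix, here `θ` is bundled with its orthogonality. -/
def rigidMotion (θ : Matrix.orthogonalGroup (Fin n) ℝ) (ξ : EuclideanSpace ℝ (Fin n)) :
    EuclideanSpace ℝ (Fin n) ≃ᵢ EuclideanSpace ℝ (Fin n) :=
  (Unitary.linearIsometryEquiv ⟨Matrix.toEuclideanCLM (n := Fin n) (𝕜 := ℝ) θ.1,
    Unitary.map_mem _ θ.2⟩).toIsometryEquiv.trans (IsometryEquiv.addLeft ξ)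

lemma coe_rigidMotion (θ : Matrix.orthogonalGroup (Fin n) ℝ) (ξ : EuclideanSpace ℝ (Fin n)) :
    ⇑(rigidMotion θ ξ) = rmApply θ ξ :=
  rfl

lemma rigidMotion_symm_apply (θ : Matrix.orthogonalGroup (Fin n) ℝ)
    (ξ p : EuclideanSpace ℝ (Fin n)) :
    (rigidMotion θ ξ).symm p = rmApply (star θ : Matrix.orthogonalGroup (Fin n) ℝ) 0 (p - ξ) := by
  have hθ : θ.1 * star θ.1 = 1 := Unitary.mul_star_self_of_mem θ.2
  rw [IsometryEquiv.symm_apply_eq, coe_rigidMotion]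
  simp only [rmApply, zero_add, ContinuousLinearEquiv.apply_symm_apply, Unitary.coe_star,
    Matrix.mulVec_mulVec, hθ, Matrix.one_mulVec, ContinuousLinearEquiv.symm_apply_apply,
    add_sub_cancel]

lemma measurePreserving_rigidMotion (θ : Matrix.orthogonalGroup (Fin n) ℝ)
    (ξ : EuclideanSpace ℝ (Fin n)) : MeasurePreserving (rigidMotion θ ξ) :=
  (measurePreserving_add_left volume ξ).comp (LinearIsometryEquiv.measurePreserving _)

lemma rmApply_zero (θ : Matrix (Fin n) (Fin n) ℝ) (ξ : EuclideanSpace ℝ (Fin n)) :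
    rmApply θ ξ 0 = ξ := by
  simp [rmApply]

lemma interior_rmApply_image (θ : Matrix.orthogonalGroup (Fin n) ℝ)
    (ξ : EuclideanSpace ℝ (Fin n)) (S : Set (EuclideanSpace ℝ (Fin n))) :
    interior (rmApply θ ξ '' S) = rmApply θ ξ '' interior S :=
  ((rigidMotion θ ξ).toHomeomorph.image_interior S).symm

lemma volume_rmApply_image (θ : Matrix.orthogonalGroup (Fin n) ℝ)
    (ξ : EuclideanSpace ℝ (Fin n)) (S : Set (EuclideanSpace ℝ (Fin n))) :
    volume (rmApply θ ξ '' S) = volume S := by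
  let e := (rigidMotion θ ξ).toHomeomorph.toMeasurableEquiv
  have he : MeasurePreserving e := measurePreserving_rigidMotion θ ξ
  rw [← he.measure_preimage_equiv, ← coe_rigidMotion]
  exact congrArg volume (preimage_image_eq S (rigidMotion θ ξ).injective)

lemma continuous_rmApply : Continuous
    fun q : Matrix (Fin n) (Fin n) ℝ × EuclideanSpace ℝ (Fin n) × EuclideanSpace ℝ (Fin n) =>
      rmApply q.1 q.2.1 q.2.2 := by
  unfold rmApply
  fun_prop

lemma isCompact_unitaryGroup (m 𝕜 : Type*) [Fintype m] [DecidableEq m] [RCLike 𝕜] :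
    IsCompact (Matrix.unitaryGroup m 𝕜 : Set (Matrix m m 𝕜)) := by
  have hbox : IsCompact (univ.pi fun _ : m => univ.pi fun _ : m => closedBall (0 : 𝕜) 1) :=
    isCompact_univ_pi fun _ => isCompact_univ_pi fun _ => isCompact_closedBall 0 1
  exact IsCompact.of_isClosed_subset (X := Matrix m m 𝕜) hbox isClosed_unitary fun U hU i _ j _ =>
    mem_closedBall_zero_iff.2 (entry_norm_bound_of_unitary hU i j)

instance compactSpace_unitaryGroup (m 𝕜 : Type*) [Fintype m] [DecidableEq m] [RCLike 𝕜] :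
    CompactSpace (Matrix.unitaryGroup m 𝕜) :=
  isCompact_iff_compactSpace.1 (isCompact_unitaryGroup m 𝕜)

end RigidMotion

section Placement

variable {n : ℕ} {C : Set (EuclideanSpace ℝ (Fin n))}

/-- The pairs `(θ, ξ)` whose rigid motion places `S` inside `C`. -/
def placements (S C : Set (EuclideanSpace ℝ (Fin n))) :
    Set (Matrix.orthogonalGroup (Fin n) ℝ × EuclideanSpace ℝ (Fin n)) :=
  {q | rmApply q.1 q.2 '' S ⊆ C}

lemma isClosed_placements (S : Set (EuclideanSpace ℝ (Fin n))) (hC : IsClosed C) :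
    IsClosed (placements S C) := by
  have hinter : placements S C = ⋂ x ∈ S, (fun q => rmApply q.1 q.2 x) ⁻¹' C := by
    ext q
    simp [placements, subset_def]
  rw [hinter]
  refine isClosed_biInter fun x _ => hC.preimage ?_
  exact continuous_rmApply.comp
    ((continuous_subtype_val.comp continuous_fst).prodMk (continuous_snd.prodMk continuous_const))

lemma translation_mem_cthickening {S : Set (EuclideanSpace ℝ (Fin n))}
    {x : EuclideanSpace ℝ (Fin n)} (hx : x ∈ S)
    {q : Matrix.orthogonalGroup (Fin n) ℝ × EuclideanSpace ℝ (Fin n)}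
    (hq : q ∈ placements S C) : q.2 ∈ cthickening ‖x‖ C := by
  have hdist : dist q.2 (rmApply q.1 q.2 x) = ‖x‖ := calc
    dist q.2 (rmApply q.1 q.2 x) = dist (rigidMotion q.1 q.2 0) (rigidMotion q.1 q.2 x) := by
      rw [coe_rigidMotion, rmApply_zero]
    _ = ‖x‖ := by rw [(rigidMotion q.1 q.2).dist_eq, dist_zero_left]
  exact mem_cthickening_of_dist_le _ _ _ _ (hq (mem_image_of_mem _ hx)) hdist.le

lemma isCompact_placements {S : Set (EuclideanSpace ℝ (Fin n))} (hS : S.Nonempty)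
    (hC : IsCompact C) : IsCompact (placements S C) := by
  obtain ⟨x, hx⟩ := hS
  exact (isCompact_univ.prod (hC.cthickening (r := ‖x‖))).of_isClosed_subset
    (isClosed_placements S hC.isClosed) fun _ hq => ⟨trivial, translation_mem_cthickening hx hq⟩

lemma isOpen_setOf_mem_interior_rmApply_image (S : Set (EuclideanSpace ℝ (Fin n)))
    (p : EuclideanSpace ℝ (Fin n)) :
    IsOpen {q : Matrix.orthogonalGroup (Fin n) ℝ × EuclideanSpace ℝ (Fin n) |
      p ∈ interior (rmApply q.1 q.2 '' S)} := by
  have hmem : ∀ q : Matrix.orthogonalGroup (Fin n) ℝ × EuclideanSpace ℝ (Fin n),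
      p ∈ interior (rmApply q.1 q.2 '' S) ↔
        rmApply (star q.1 : Matrix.orthogonalGroup (Fin n) ℝ) 0 (p - q.2) ∈ interior S := by
    intro q
    rw [interior_rmApply_image, ← rigidMotion_symm_apply, ← coe_rigidMotion,
      ← IsometryEquiv.preimage_symm, mem_preimage]
  simp only [hmem]
  refine isOpen_interior.preimage (continuous_rmApply.comp (.prodMk ?_ (.prodMk ?_ ?_)))
  · exact continuous_subtype_val.comp continuous_fst.star
  · exact continuous_const
  · exact continuous_const.sub continuous_snd

/-- The pairs of placements for which the images of `S` and `T` have disjoint interiors. -/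
def nonoverlappingPlacements (S T : Set (EuclideanSpace ℝ (Fin n))) :
    Set ((Matrix.orthogonalGroup (Fin n) ℝ × EuclideanSpace ℝ (Fin n)) ×
      (Matrix.orthogonalGroup (Fin n) ℝ × EuclideanSpace ℝ (Fin n))) :=
  {q | interior (rmApply q.1.1 q.1.2 '' S) ∩ interior (rmApply q.2.1 q.2.2 '' T) = ∅}

lemma isClosed_nonoverlappingPlacements (S T : Set (EuclideanSpace ℝ (Fin n))) :
    IsClosed (nonoverlappingPlacements S T) := by
  have hinter : nonoverlappingPlacements S T =
      ⋂ p, (Prod.fst ⁻¹' {q | p ∈ interior (rmApply q.1 q.2 '' S)} ∩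
        Prod.snd ⁻¹' {q | p ∈ interior (rmApply q.1 q.2 '' T)})ᶜ := by
    ext q
    simp only [nonoverlappingPlacements, eq_empty_iff_forall_notMem, mem_iInter]
    rfl
  rw [hinter]
  exact isClosed_iInter fun p => IsOpen.isClosed_compl <|
    ((isOpen_setOf_mem_interior_rmApply_image S p).preimage continuous_fst).inter
      ((isOpen_setOf_mem_interior_rmApply_image T p).preimage continuous_snd)

end Placement

section Packing

variable {n : ℕ} {ι : Type*} {A : ι → Set (EuclideanSpace ℝ (Fin n))}
  {C : Set (EuclideanSpace ℝ (Fin n))}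

/-- The space of packings of the family `A` into `C`. Orthogonality is part of the ambient type, so
that this is a subset of a product of copies of the isometry group `O(n) × ℝⁿ`. -/
def packings (A : ι → Set (EuclideanSpace ℝ (Fin n))) (C : Set (EuclideanSpace ℝ (Fin n))) :
    Set (ι → Matrix.orthogonalGroup (Fin n) ℝ × EuclideanSpace ℝ (Fin n)) :=
  {σ | IsPacking A (fun i => (σ i).1) (fun i => (σ i).2) C}

lemma mem_packings {σ : ι → Matrix.orthogonalGroup (Fin n) ℝ × EuclideanSpace ℝ (Fin n)} :
    σ ∈ packings A C ↔ (∀ i, σ i ∈ placements (A i) C) ∧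
      ∀ i j, i ≠ j → (σ i, σ j) ∈ nonoverlappingPlacements (A i) (A j) :=
  and_iff_right fun i => (σ i).1.2

lemma packings_nonempty_iff : (packings A C).Nonempty ↔ PacksInto A C := by
  constructor
  · rintro ⟨σ, hσ⟩
    exact ⟨_, _, hσ⟩
  · rintro ⟨θ, ξ, h⟩
    exact ⟨fun i => (⟨θ i, h.1 i⟩, ξ i), h⟩

lemma packings_mono {D : Set (EuclideanSpace ℝ (Fin n))} (hCD : C ⊆ D) :
    packings A C ⊆ packings A D :=
  fun _ hσ => ⟨hσ.1, fun i => (hσ.2.1 i).trans hCD, hσ.2.2⟩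

lemma packings_iInter {κ : Type*} [Nonempty κ] (C : κ → Set (EuclideanSpace ℝ (Fin n))) :
    packings A (⋂ k, C k) = ⋂ k, packings A (C k) := by
  ext σ
  simp only [mem_packings, placements, mem_ofPred_eq, subset_iInter_iff, mem_iInter,
    forall_and, forall_const]
  rw [forall_comm]

lemma isClosed_packings (hC : IsClosed C) : IsClosed (packings A C) := by
  have hinter : packings A C = (⋂ i, (fun σ => σ i) ⁻¹' placements (A i) C) ∩
      ⋂ i, ⋂ j, ⋂ _ : i ≠ j,
        (fun σ => (σ i, σ j)) ⁻¹' nonoverlappingPlacements (A i) (A j) := by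
    ext σ
    simp only [mem_packings, mem_inter_iff, mem_iInter, mem_preimage]
  rw [hinter]
  refine .inter (isClosed_iInter fun i => (isClosed_placements (A i) hC).preimage
    (continuous_apply i)) ?_
  exact isClosed_iInter fun i => isClosed_iInter fun j => isClosed_iInter fun _ =>
    (isClosed_nonoverlappingPlacements (A i) (A j)).preimage
      ((continuous_apply i).prodMk (continuous_apply j))

lemma isCompact_packings (hA : ∀ i, (A i).Nonempty) (hC : IsCompact C) :
    IsCompact (packings A C) :=
  (isCompact_univ_pi fun i => isCompact_placements (hA i) hC).of_isClosed_subset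
    (isClosed_packings hC.isClosed) fun _ hσ i _ => (mem_packings.1 hσ).1 i

theorem packsInto_iInter_of_directed {κ : Type*} [Nonempty κ]
    {C : κ → Set (EuclideanSpace ℝ (Fin n))} (hA : ∀ i, (A i).Nonempty)
    (hdir : Directed (· ⊇ ·) C) (hC : ∀ k, IsCompact (C k)) (h : ∀ k, PacksInto A (C k)) :
    PacksInto A (⋂ k, C k) := by
  rw [← packings_nonempty_iff, packings_iInter]
  exact IsCompact.nonempty_iInter_of_directed_nonempty_isCompact_isClosed _
    (fun j k => (hdir j k).imp fun _ hl => ⟨packings_mono hl.1, packings_mono hl.2⟩)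
    (fun k => packings_nonempty_iff.2 (h k)) (fun k => isCompact_packings hA (hC k))
    fun k => isClosed_packings (hC k).isClosed

lemma IsPacking.volume_iUnion_interior [Countable ι] {θ : ι → Matrix (Fin n) (Fin n) ℝ}
    {ξ : ι → EuclideanSpace ℝ (Fin n)} (h : IsPacking A θ ξ C) :
    volume (⋃ i, interior (rmApply (θ i) (ξ i) '' A i)) = ∑' i, volume (interior (A i)) := by
  rw [measure_iUnion (fun i j hij => disjoint_iff_inter_eq_empty.2 (h.2.2 hij))
    fun i => isOpen_interior.measurableSet]
  refine tsum_congr fun i => ?_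
  rw [interior_rmApply_image ⟨θ i, h.1 i⟩, volume_rmApply_image ⟨θ i, h.1 i⟩]

theorem IsPacking.volume_sdiff_iUnion_eq_zero [Countable ι] {θ : ι → Matrix (Fin n) (Fin n) ℝ}
    {ξ : ι → EuclideanSpace ℝ (Fin n)} (h : IsPacking A θ ξ C) (hC : volume C ≠ ⊤)
    (hvol : volume C ≤ ∑' i, volume (interior (A i))) :
    volume (C \ ⋃ i, rmApply (θ i) (ξ i) '' A i) = 0 := by
  have hsub : ⋃ i, interior (rmApply (θ i) (ξ i) '' A i) ⊆ C :=
    iUnion_subset fun i => interior_subset.trans (h.2.1 i)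
  refine measure_mono_null (sdiff_subset_sdiff_right (iUnion_mono fun i => interior_subset)) ?_
  rw [measure_sdiff hsub (isOpen_iUnion fun i => isOpen_interior).nullMeasurableSet
    (measure_ne_top_of_subset hsub hC), h.volume_iUnion_interior, tsub_eq_zero_of_le hvol]

end Packing

section Rectangle

lemma rect_eq_preimage (w h : ℝ) : rect w h = WithLp.ofLp ⁻¹' Icc 0 ![w, h] := by
  ext x
  simp [rect, Pi.le_def, Fin.forall_fin_two, and_and_and_comm]

lemma convex_rect (w h : ℝ) : Convex ℝ (rect w h) := by
  rw [rect_eq_preimage]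
  exact (convex_Icc _ _).linear_preimage (WithLp.linearEquiv 2 ℝ (Fin 2 → ℝ)).toLinearMap

lemma isCompact_rect (w h : ℝ) : IsCompact (rect w h) := by
  rw [rect_eq_preimage]
  exact (PiLp.homeomorph 2 fun _ : Fin 2 => ℝ).isCompact_preimage.2 isCompact_Icc

lemma volume_rect (w h : ℝ) : volume (rect w h) = ENNReal.ofReal w * ENNReal.ofReal h := by
  rw [rect_eq_preimage, (PiLp.volume_preserving_ofLp (Fin 2)).measure_preimage
    measurableSet_Icc.nullMeasurableSet, Real.volume_Icc_pi]
  simp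

lemma volume_interior_rect (w h : ℝ) :
    volume (interior (rect w h)) = ENNReal.ofReal w * ENNReal.ofReal h := by
  rw [measure_congr (interior_ae_eq_of_null_frontier ((convex_rect w h).addHaar_frontier volume)),
    volume_rect]

lemma zero_mem_rect {w h : ℝ} (hw : 0 ≤ w) (hh : 0 ≤ h) : 0 ∈ rect w h :=
  ⟨⟨le_rfl, hw⟩, le_rfl, hh⟩

lemma monotone_rect (h : ℝ) : Monotone fun w => rect w h :=
  fun _ _ hvw _ hx => ⟨⟨hx.1.1, hx.1.2.trans hvw⟩, hx.2⟩

lemma directed_rect_add (w h : ℝ) : Directed (· ⊇ ·) fun ε : Ioi (0 : ℝ) => rect (w + ε) h :=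
  Monotone.directed_ge fun _ _ hε => monotone_rect h (by gcongr)

lemma iInter_rect_add (w h : ℝ) : ⋂ ε : Ioi (0 : ℝ), rect (w + ε) h = rect w h := by
  refine Subset.antisymm (fun x hx => ?_)
    (subset_iInter fun ε => monotone_rect h (le_add_of_nonneg_right (le_of_lt ε.2)))
  have hx' : ∀ ε : Ioi (0 : ℝ), x ∈ rect (w + ε) h := mem_iInter.1 hx
  have hx₁ : x ∈ rect (w + 1) h := hx' ⟨1, mem_Ioi.2 one_pos⟩
  exact ⟨⟨hx₁.1.1, le_of_forall_pos_le_add fun ε hε => (hx' ⟨ε, hε⟩).1.2⟩, hx₁.2⟩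

end Rectangle

section ReciprocalSquares

lemma reciprocalSquares_nonempty (i : ℕ) : (reciprocalSquares i).Nonempty :=
  ⟨0, zero_mem_rect (by positivity) (by positivity)⟩

lemma hasSum_one_div_nat_add_two_sq :
    HasSum (fun i : ℕ => (1 / ((i : ℝ) + 2)) ^ 2) (Real.pi ^ 2 / 6 - 1) := by
  simpa [Finset.sum_range_succ] using (hasSum_nat_add_iff' 2).2 hasSum_zeta_two

lemma tsum_volume_interior_reciprocalSquares :
    ∑' i, volume (interior (reciprocalSquares i)) = ENNReal.ofReal (Real.pi ^ 2 / 6 - 1) := by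
  rw [← hasSum_one_div_nat_add_two_sq.tsum_eq, ENNReal.ofReal_tsum_of_nonneg
    (fun i => by positivity) hasSum_one_div_nat_add_two_sq.summable]
  refine tsum_congr fun i => ?_
  rw [reciprocalSquares, volume_interior_rect, ← ENNReal.ofReal_mul (by positivity), ← sq]

end ReciprocalSquares

/-- **Corollary 2 (second part).** If for every `ε > 0` the squares of side lengths `1/2`,
`1/3`, `1/4`, … can be packed into a rectangle of height `1` and area `π²/6 - 1 + ε`,
then they tile a rectangle of dimensions `1 × (π²/6 - 1)`: there is a packing into that
rectangle whose complement in it has Lebesgue measure zero. -/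
theorem reciprocal_squares_tile_unit_height_rectangle
    (h : ∀ ε : ℝ, 0 < ε →
      PacksInto reciprocalSquares (rect (Real.pi ^ 2 / 6 - 1 + ε) 1)) :
    ∃ (θ : ℕ → Matrix (Fin 2) (Fin 2) ℝ) (ξ : ℕ → EuclideanSpace ℝ (Fin 2)),
      IsPacking reciprocalSquares θ ξ (rect (Real.pi ^ 2 / 6 - 1) 1) ∧
      MeasureTheory.volume
        (rect (Real.pi ^ 2 / 6 - 1) 1 \
          ⋃ i, rmApply (θ i) (ξ i) '' reciprocalSquares i) = 0 := by
  have hpacks : PacksInto reciprocalSquares (rect (Real.pi ^ 2 / 6 - 1) 1) := by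
    rw [← iInter_rect_add]
    exact packsInto_iInter_of_directed reciprocalSquares_nonempty (directed_rect_add _ _)
      (fun ε => isCompact_rect _ _) fun ε => h ε ε.2
  obtain ⟨θ, ξ, hpack⟩ := hpacks
  refine ⟨θ, ξ, hpack, ?_⟩
  refine hpack.volume_sdiff_iUnion_eq_zero (isCompact_rect _ _).measure_ne_top ?_
  rw [volume_rect, tsum_volume_interior_reciprocalSquares, ENNReal.ofReal_one, mul_one]
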